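/- arXiv:1405.1630 — 3 statements merged into one kernel-verified Lean document; each statement's English description precedes it below -/
import Mathlib

section
/- Let ι be a finite index type, X a type of input variables, and for each x : X let g_x : (ι → Bool) → Prop. For a binary vector s : ι → Bool define Xv(s) = {x : X | g_x(s)}, let vars : ι → Set X, say predicate i is observable at s iff vars(i) ⊆ Xv(s), and define the observation Obs(s) = {(i, s(i)) | i is observable at s} ⊆ ι × Bool. Assume: (i) for each x : X there is a set J_x ⊆ ι such that g_x depends only on the coordinates in J_x (if s and s' agree on J_x then g_x(s) ↔ g_x(s')), and (ii) every index i ∈ J_x (for any x) is observable at every binary vector. Then for all binary vectors s, s' with Obs(s) = Obs(s'), one has Xv(s) = Xv(s'). -/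
/-- Binary-vector-level core of Lemma 2: if each sensor formula `g x` depends only on a set
`J x` of predicate indices, all of which are observable at every binary vector, then
observation-equivalent binary vectors have the same set of observable variables. -/
theorem obs_equiv_same_visible_vars
    {ι X : Type*} [Fintype ι]
    (g : X → (ι → Bool) → Prop)
    (Xv : (ι → Bool) → Set X) (hXv : ∀ s, Xv s = {x : X | g x s})
    (vars : ι → Set X)
    (obsAt : ι → (ι → Bool) → Prop) (hobsAt : ∀ i s, obsAt i s ↔ vars i ⊆ Xv s)
    (Obs : (ι → Bool) → Set (ι × Bool))
    (hObs : ∀ s, Obs s = {q : ι × Bool | obsAt q.1 s ∧ q.2 = s q.1})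
    (hdep : ∀ x : X, ∃ J : Set ι,
      (∀ s s' : ι → Bool, (∀ i ∈ J, s i = s' i) → (g x s ↔ g x s')) ∧
      (∀ i ∈ J, ∀ t : ι → Bool, obsAt i t)) :
    ∀ s s' : ι → Bool, Obs s = Obs s' → Xv s = Xv s' := by
  intro s s' h
  ext x
  obtain ⟨J, hg, hJ⟩ := hdep x
  rw [hXv, hXv]
  refine hg s s' fun i hi => ?_
  -- `i` is observable at `s`, so the pair `(i, s i)` lies in the common observation.
  have hmem : (i, s i) ∈ Obs s' := by
    rw [← h, hObs]
    exact ⟨hJ i hi s, rfl⟩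
  rw [hObs] at hmem
  exact hmem.2
end

section
/- Let V, ι, p, α, γ, X, O_x, ObsX, g_x, vars be as in the semantic sensor-model setting (for each x : X, O_x(v) ↔ g_x(α(v)) for all v), define Xv(s) = {x | g_x(s)}, predicate i observable at s iff vars(i) ⊆ Xv(s), and Obs(s) = {(i, s(i)) | i observable at s}. Assume for each x : X there is J_x ⊆ ι such that g_x depends only on coordinates in J_x and every i ∈ J_x is observable at every binary vector. Let s^a be an abstract state, i.e., a nonempty set of binary vectors that are pairwise observation-equivalent (Obs(s) = Obs(s') for all s, s' ∈ s^a). Then for all concrete states v, v' ∈ ⋃_{s ∈ s^a} γ(s), it holds that ObsX(v) = ObsX(v'). -/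
/-! The sensor condition of a variable `x` is determined by predicates that are observable at every
binary vector. The values of these predicates are therefore recorded in the observation, so
observation-equivalent vectors agree on them, and hence on whether `x` is observable. -/

/-- **Lemma 2.** All concrete states concretizing binary vectors belonging to the same
abstract state (a nonempty set of pairwise observation-equivalent binary vectors) share
the same set of observable variables. -/
theorem abstract_state_obs_constant
    {V ι X : Type*} [Fintype ι]
    (p : ι → V → Bool)
    (α : V → ι → Bool) (hα : ∀ v i, α v i = p i v)
    (γ : (ι → Bool) → Set V) (hγ : ∀ s, γ s = {v : V | α v = s})
    (O : X → V → Prop)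
    (ObsX : V → Set X) (hObsX : ∀ v, ObsX v = {x : X | O x v})
    (g : X → (ι → Bool) → Prop)
    (hfactor : ∀ (x : X) (v : V), O x v ↔ g x (α v))
    (vars : ι → Set X)
    (Xv : (ι → Bool) → Set X) (hXv : ∀ s, Xv s = {x : X | g x s})
    (obsAt : ι → (ι → Bool) → Prop) (hobsAt : ∀ i s, obsAt i s ↔ vars i ⊆ Xv s)
    (Obs : (ι → Bool) → Set (ι × Bool))
    (hObs : ∀ s, Obs s = {q : ι × Bool | obsAt q.1 s ∧ q.2 = s q.1})
    (hdep : ∀ x : X, ∃ J : Set ι,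
      (∀ s s' : ι → Bool, (∀ i ∈ J, s i = s' i) → (g x s ↔ g x s')) ∧
      (∀ i ∈ J, ∀ t : ι → Bool, obsAt i t))
    (sa : Set (ι → Bool)) (hne : sa.Nonempty)
    (hequiv : ∀ s ∈ sa, ∀ s' ∈ sa, Obs s = Obs s') :
    ∀ v ∈ ⋃ s ∈ sa, γ s, ∀ v' ∈ ⋃ s ∈ sa, γ s, ObsX v = ObsX v' := by
  intro v hv v' hv'
  simp only [Set.mem_iUnion, hγ, Set.mem_ofPred_eq, exists_prop, exists_eq_right'] at hv hv'
  rw [hObsX, hObsX]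
  ext x
  obtain ⟨J, hJ, hJobs⟩ := hdep x
  simp only [Set.mem_ofPred_eq, hfactor]
  refine hJ _ _ fun i hi => ?_
  have hmem : (i, α v i) ∈ Obs (α v') := by
    rw [← hequiv _ hv _ hv', hObs]
    exact ⟨hJobs i hi _, rfl⟩
  rw [hObs] at hmem
  exact hmem.2
end

section
/- Let (V, turn, T, E, v₀) be a concrete turn-based game and (S, turnA, TA, EA, s₀) an abstract turn-based game, both with total transition relations, and let R : V → S → Prop satisfy: (h0) R v₀ s₀; (h1) if R v s then turn v = turnA s; (h2) if R v s, turnA s = true and TA s s', then there exists v' with T v v' and R v' s'; (h3) if R v s, turn v = false and T v v', then there exists s' with TA s s' and R v' s'. Then for every player-1 strategy fA in the abstract game there exists a player-1 strategy f in the concrete game such that every play ρ from v₀ consistent with f is tracked by an abstract play ρA from s₀ consistent with fA satisfying R(ρ(n), ρA(n)) for all n : ℕ. -/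
/-!
Player 1 runs the abstract game in memory. From a concrete history one computes deterministically
an abstract history (`absHist`): at abstract player-1 states it follows `fA`, and at player-2
states it answers the observed concrete move by a chosen related abstract move, available by (h3).
The concrete strategy evaluates `fA` on this abstract history and plays a concrete successor
related to the result, available by (h2). Along a consistent play the last states of the shadow
histories form an abstract play whose prefixes are exactly these histories, so it is consistent
with `fA`; the relation `R` is preserved by induction.
-/

/-- A play of a turn-based game from `v0`: starts at `v0` and follows the transition
relation `T`. -/
def IsPlay {V : Type*} (T : V → V → Prop) (v0 : V) (ρ : ℕ → V) : Prop :=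
  ρ 0 = v0 ∧ ∀ n : ℕ, T (ρ n) (ρ (n + 1))

/-- The finite history `ρ(0) ⋯ ρ(n)` of a play. -/
def histPrefix {V : Type*} (ρ : ℕ → V) (n : ℕ) : List V :=
  List.ofFn (fun i : Fin (n + 1) => ρ i)

/-- A player-1 strategy: to every nonempty finite history ending in a state `v` where
player 1 moves (`turn v = true`) it assigns a `T`-successor of `v`. -/
def IsStrategy1 {V : Type*} (turn : V → Bool) (T : V → V → Prop) (f : List V → V) : Prop :=
  ∀ (h : List V) (v : V), h.getLast? = some v → turn v = true → T v (f h)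

/-- A play is consistent with the player-1 strategy `f`. -/
def Consistent1 {V : Type*} (turn : V → Bool) (f : List V → V) (ρ : ℕ → V) : Prop :=
  ∀ n : ℕ, turn (ρ n) = true → ρ (n + 1) = f (histPrefix ρ n)

theorem histPrefix_zero {V : Type*} (ρ : ℕ → V) : histPrefix ρ 0 = [ρ 0] := by
  simp [histPrefix]

theorem histPrefix_succ {V : Type*} (ρ : ℕ → V) (n : ℕ) :
    histPrefix ρ (n + 1) = histPrefix ρ n ++ [ρ (n + 1)] := by
  unfold histPrefix
  rw [List.ofFn_succ']
  simp [List.concat_eq_append]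

theorem histPrefix_getLast? {V : Type*} (ρ : ℕ → V) (n : ℕ) :
    (histPrefix ρ n).getLast? = some (ρ n) := by
  cases n with
  | zero => simp [histPrefix_zero]
  | succ n => simp [histPrefix_succ]

/-- The abstract state appended to the abstract history `H` when the concrete game moves to `v`:
`s0` if `H` is empty, the move of `fA` if player 1 owns the last state `s` of `H`, and otherwise
the successor `g s v` of `s` chosen to match `v`. -/
def nextAbs {V S : Type*} (turnA : S → Bool) (fA : List S → S) (g : S → V → S) (s0 : S)
    (H : List S) (v : V) : S :=
  match H.getLast? with
  | none => s0
  | some s => if turnA s = true then fA H else g s v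

/-- The abstract history shadowing a concrete history, built state by state with `nextAbs`. -/
def absHist {V S : Type*} (turnA : S → Bool) (fA : List S → S) (g : S → V → S) (s0 : S)
    (h : List V) : List S :=
  h.foldl (fun H v => H ++ [nextAbs turnA fA g s0 H v]) []

theorem absHist_append_singleton {V S : Type*} (turnA : S → Bool) (fA : List S → S)
    (g : S → V → S) (s0 : S) (h : List V) (v : V) :
    absHist turnA fA g s0 (h ++ [v]) =
      absHist turnA fA g s0 h ++ [nextAbs turnA fA g s0 (absHist turnA fA g s0 h) v] := by
  simp [absHist]

/-- Tracking/simulation lemma underlying Theorem 1: under the abstraction conditions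
(h0)–(h3), every abstract player-1 strategy can be concretized to a concrete player-1
strategy all of whose plays are tracked (via `R`) by abstract plays consistent with the
abstract strategy. -/
theorem tracking_of_abstract_strategy
    {V S : Type*}
    (turn : V → Bool) (T : V → V → Prop) (hT : ∀ v : V, ∃ v', T v v')
    (E : Set V) (v0 : V)
    (turnA : S → Bool) (TA : S → S → Prop) (hTA : ∀ s : S, ∃ s', TA s s')
    (EA : Set S) (s0 : S)
    (R : V → S → Prop)
    (h0 : R v0 s0)
    (h1 : ∀ v s, R v s → turn v = turnA s)
    (h2 : ∀ v s s', R v s → turnA s = true → TA s s' → ∃ v', T v v' ∧ R v' s')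
    (h3 : ∀ v s v', R v s → turn v = false → T v v' → ∃ s', TA s s' ∧ R v' s') :
    ∀ fA : List S → S, IsStrategy1 turnA TA fA →
      ∃ f : List V → V, IsStrategy1 turn T f ∧
        ∀ ρ : ℕ → V, IsPlay T v0 ρ → Consistent1 turn f ρ →
          ∃ ρA : ℕ → S, IsPlay TA s0 ρA ∧ Consistent1 turnA fA ρA ∧
            ∀ n : ℕ, R (ρ n) (ρA n) := by
  intro fA hfA
  classical
  -- `g s v` matches the concrete move to `v` by an abstract move from `s`, whenever possible.
  have hg : ∀ s v, ∃ s', (∃ t, TA s t ∧ R v t) → TA s s' ∧ R v s' := by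
    intro s v
    by_cases h : ∃ t, TA s t ∧ R v t
    · exact h.imp fun t ht _ => ht
    · exact ⟨s, fun h' => absurd h' h⟩
  choose g hg using hg
  -- `k v s` is always a legal concrete move, and is related to `s` whenever possible: a strategy
  -- has to be legal also on histories that are not tracked.
  have hk : ∀ v s, ∃ v', T v v' ∧ ((∃ w, T v w ∧ R w s) → R v' s) := by
    intro v s
    by_cases h : ∃ w, T v w ∧ R w s
    · exact h.imp fun w hw => ⟨hw.1, fun _ => hw.2⟩
    · exact (hT v).imp fun w hw => ⟨hw, fun h' => absurd h' h⟩
  choose k hkT hkR using hk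
  refine ⟨fun h => k (h.getLast?.getD v0) (fA (absHist turnA fA g s0 h)), ?_, ?_⟩
  · intro h v hv _
    simpa [hv] using hkT v _
  intro ρ hρ hcons
  let A : ℕ → List S := fun n => absHist turnA fA g s0 (histPrefix ρ n)
  let ρA : ℕ → S := fun n => (A n).getLast?.getD s0
  have hA0 : A 0 = [s0] := by simp [A, histPrefix_zero, absHist, nextAbs]
  have hAsucc : ∀ n, A (n + 1) = A n ++ [nextAbs turnA fA g s0 (A n) (ρ (n + 1))] := by
    intro n
    simp only [A, histPrefix_succ, absHist_append_singleton]
  have hρA0 : ρA 0 = s0 := by simp [ρA, hA0]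
  have hρAnext : ∀ n, ρA (n + 1) = nextAbs turnA fA g s0 (A n) (ρ (n + 1)) := by
    intro n
    simp [ρA, hAsucc]
  have hA : ∀ n, A n = histPrefix ρA n := by
    intro n
    induction n with
    | zero => rw [hA0, histPrefix_zero, hρA0]
    | succ n ih => rw [histPrefix_succ, hρAnext, hAsucc, ih]
  have hρAsucc : ∀ n, ρA (n + 1) =
      if turnA (ρA n) = true then fA (histPrefix ρA n) else g (ρA n) (ρ (n + 1)) := by
    intro n
    rw [hρAnext, hA, nextAbs, histPrefix_getLast?]
  have hstep : ∀ n, R (ρ n) (ρA n) → TA (ρA n) (ρA (n + 1)) ∧ R (ρ (n + 1)) (ρA (n + 1)) := by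
    intro n hR
    have ht := h1 _ _ hR
    rw [hρAsucc]
    split_ifs with hturn
    · have hTA' := hfA _ _ (histPrefix_getLast? ρA n) hturn
      have hmove : ρ (n + 1) = k (ρ n) (fA (histPrefix ρA n)) := by
        rw [hcons n (ht.trans hturn), ← hA n]
        simp only [histPrefix_getLast?, Option.getD_some, A]
      refine ⟨hTA', ?_⟩
      rw [hmove]
      exact hkR _ _ (h2 _ _ _ hR hturn hTA')
    · exact hg _ _ (h3 _ _ _ hR (ht.trans (Bool.eq_false_of_not_eq_true hturn)) (hρ.2 n))
  have hR : ∀ n, R (ρ n) (ρA n) := by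
    intro n
    induction n with
    | zero => rw [hρ.1, hρA0]; exact h0
    | succ n ih => exact (hstep n ih).2
  refine ⟨ρA, ⟨hρA0, fun n => (hstep n (hR n)).1⟩, ?_, hR⟩
  intro n hturn
  rw [hρAsucc, if_pos hturn]
end
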